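/- The ring QH_α = S[q]/⟨σ_{k+1},...,σ_{n-1}, σ_n + (-1)^m α q⟩ is a free ℚ[q]-module with basis {σ_λ : λ ⊆ m×k}. -/

import Mathlib

/-- The sequence `c = (c_1, …, c_m, 0, 0, …)` of variables of `S = ℚ[c_1, …, c_m]`,
with `c_0 = 1` and `c_i = 0` for `i < 0` or `i > m`. -/
noncomputable def cVar (m : ℕ) : ℤ → MvPolynomial (Fin m) ℚ := fun i =>
  if h : 1 ≤ i ∧ i ≤ (m : ℤ) then MvPolynomial.X ⟨(i - 1).toNat, by omega⟩
  else if i = 0 then 1 else 0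

/-- `σ_p = Δ_{(1^p)}(c) = det(c_{1+j-i})_{p×p}`, extended by `σ_p = 0` for `p < 0`. -/
noncomputable def sigmaP (m : ℕ) : ℤ → MvPolynomial (Fin m) ℚ := fun p =>
  if p < 0 then 0
  else Matrix.det (Matrix.of fun i j : Fin p.toNat => cVar m (1 + (j : ℤ) - (i : ℤ)))

/-- `σ_λ = Δ_λ(σ) = det(σ_{λ_i+j-i})`. -/
noncomputable def sigmaL (m : ℕ) {l : ℕ} (lam : Fin l → ℕ) : MvPolynomial (Fin m) ℚ :=
  Matrix.det (Matrix.of fun i j : Fin l => sigmaP m ((lam i : ℤ) + (j : ℤ) - (i : ℤ)))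

/-- The deformed quantum ring `QH_α = S[q]/⟨σ_{k+1}, …, σ_{n-1}, σ_n + (-1)^m α q⟩`
is the quotient of `Polynomial (MvPolynomial (Fin m) ℚ)` by this ideal. -/
noncomputable def qhIdeal (m k : ℕ) (α : ℚ) :
    Ideal (Polynomial (MvPolynomial (Fin m) ℚ)) :=
  Ideal.span
    ((fun p : ℤ => Polynomial.C (sigmaP m p)) '' Set.Icc ((k : ℤ) + 1) ((m : ℤ) + k - 1) ∪
      {Polynomial.C (sigmaP m ((m : ℤ) + k)) +
        (-1) ^ m * Polynomial.C (MvPolynomial.C α) * Polynomial.X})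

/-!
After adding the staircase to `λ`, the class `σ_λ` is a maximal minor of the Hankel matrix of the
sequence `σ`, which is the fundamental solution of a linear recurrence of order `m` with
coefficients `± c_i`.

*Spanning.* A Pieri rule writes `c_r` times a minor as a sum of minors, so the minors span `S`. The
relations of `QH_α` say that `σ_{p+n-m+1} = -(-1)ᵐ α q σ_{p-m+1}` for `p < m`, and the recurrence
propagates this to all `p`. Hence the row indices of a minor can be reduced modulo `n` and sorted,
which leaves exactly the minors coming from `λ ⊆ m × k`.

*Independence.* Substitute elementary symmetric polynomials in `x_1, …, x_m` for the `c_i`. By the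
bialternant formula, the Vandermonde determinant times a minor is an alternant, and the ideal of
`QH_α` times it lands in the ideal of the relations `x_lⁿ = -(-1)ᵐ α q`. Modulo that ideal, the
monomials with exponents below `n` are independent, so the alternants with distinct strictly
decreasing exponents below `n` are too.
-/

namespace QuantumSchubert

theorem existsUnique_eq_sum_smul_of_linearIndepOn {K M ι : Type*} [Ring K] [AddCommGroup M]
    [Module K M] {v : ι → M} {s : Finset ι} (hv : LinearIndepOn K v s) {x : M}
    (hx : x ∈ Submodule.span K (v '' s)) :
    ∃! f : ι → K, (∀ i ∉ s, f i = 0) ∧ x = ∑ i ∈ s, f i • v i := by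
  classical
  obtain ⟨g, rfl⟩ := (Submodule.mem_span_image_finset_iff_exists_fun' K).mp hx
  refine ⟨fun i => if i ∈ s then g i else 0, ⟨fun i hi => if_neg hi,
    Finset.sum_congr rfl fun i hi => by simp only [if_pos hi]⟩, ?_⟩
  rintro f ⟨hf, hgf⟩
  have sum_sub : ∑ i ∈ s, (f i - g i) • v i = 0 := by
    simp only [sub_smul, Finset.sum_sub_distrib, hgf, sub_self]
  funext i
  split_ifs with hi
  · exact sub_eq_zero.mp (linearIndepOn_finset_iff.mp hv _ sum_sub i hi)
  · exact hf i hi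

section RowMinor

variable {κ ι R : Type*} [Fintype ι] [DecidableEq ι] [CommRing R]

/-- The maximal minor of a matrix with arbitrarily many rows on the rows `b i`. The order of the
rows matters and repetitions are allowed. -/
def rowMinor (A : Matrix κ ι R) (b : ι → κ) : R := (A.submatrix b id).det

lemma map_rowMinor {S : Type*} [CommRing S] (φ : R →+* S) (A : Matrix κ ι R) (b : ι → κ) :
    φ (rowMinor A b) = rowMinor (A.map φ) b :=
  φ.map_det _

lemma rowMinor_comp_perm (A : Matrix κ ι R) (b : ι → κ) (π : Equiv.Perm ι) :
    rowMinor A (b ∘ π) = (Equiv.Perm.sign π : ℤ) * rowMinor A b :=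
  Matrix.det_permute π (A.submatrix b id)

lemma rowMinor_eq_zero_of_not_injective (A : Matrix κ ι R) {b : ι → κ}
    (hb : ¬ Function.Injective b) : rowMinor A b = 0 := by
  obtain ⟨i, j, hij, hne⟩ := Function.not_injective_iff.mp hb
  exact Matrix.det_zero_of_row_eq hne (congrArg A hij)

lemma rowMinor_mul (A : Matrix κ ι R) (G : Matrix ι ι R) (b : ι → κ) :
    rowMinor (A * G) b = rowMinor A b * G.det :=
  Matrix.det_mul (A.submatrix b id) G

lemma rowMinor_of_rows_eq_smul {A : Matrix κ ι R} {b b' : ι → κ} (s : ι → R)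
    (h : ∀ i, A (b i) = s i • A (b' i)) : rowMinor A b = (∏ i, s i) * rowMinor A b' := by
  rw [rowMinor, rowMinor, ← Matrix.det_mul_column]
  congr 1
  ext i j
  exact congrFun (h i) j

lemma rowMinor_update_of_row_eq_smul {A : Matrix κ ι R} {p q : κ} {s : R} (h : A p = s • A q)
    (b : ι → κ) (i : ι) :
    rowMinor A (Function.update b i p) = s * rowMinor A (Function.update b i q) := by
  rw [rowMinor_of_rows_eq_smul (b' := Function.update b i q) (Pi.mulSingle i s),
    Fintype.prod_pi_mulSingle']
  intro j
  obtain rfl | hj := eq_or_ne j i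
  · simpa using h
  · simp [hj]

end RowMinor

lemma row_eq_pow_smul_row_mod {ι R : Type*} [CommRing R] {A : Matrix ℕ ι R} {n : ℕ} {s : R}
    (hA : ∀ p, A (p + n) = s • A p) (p : ℕ) : A p = s ^ (p / n) • A (p % n) := by
  have add_mul (r t : ℕ) : A (r + n * t) = s ^ t • A r := by
    induction t with
    | zero => simp
    | succ t ih => rw [Nat.mul_succ, ← add_assoc, hA, ih, smul_smul, ← pow_succ']
  simpa only [Nat.mod_add_div] using add_mul (p % n) (p / n)

-- Reduce the row indices modulo `n`, then sort them.
theorem rowMinor_mem_of_strictAnti_mem {K R : Type*} [CommRing K] [CommRing R] [Algebra K R]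
    {m n : ℕ} (hn : 0 < n) {A : Matrix ℕ (Fin m) R} {a : K} (hA : ∀ p, A (p + n) = a • A p)
    {N : Submodule K R} (hN : ∀ b, StrictAnti b → (∀ i, b i < n) → rowMinor A b ∈ N)
    (b : Fin m → ℕ) : rowMinor A b ∈ N := by
  have mem_of_lt (b : Fin m → ℕ) (hb : ∀ i, b i < n) : rowMinor A b ∈ N := by
    by_cases hinj : Function.Injective b
    · let π : Equiv.Perm (Fin m) := Fin.revPerm.trans (Tuple.sort b)
      have hmono : StrictMono (b ∘ Tuple.sort b) :=
        (Tuple.monotone_sort b).strictMono_of_injective (hinj.comp (Equiv.injective _))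
      have hmem := hN (b ∘ π) (hmono.comp_strictAnti Fin.rev_strictAnti) fun i => hb _
      rw [rowMinor_comp_perm] at hmem
      obtain hsign | hsign := Int.units_eq_one_or (Equiv.Perm.sign π) <;>
        simpa [hsign] using hmem
    · rw [rowMinor_eq_zero_of_not_injective A hinj]
      exact N.zero_mem
  simp only [← algebraMap_smul R a] at hA
  rw [rowMinor_of_rows_eq_smul _ fun i => row_eq_pow_smul_row_mod hA (b i)]
  simp only [← map_pow, ← map_prod, ← Algebra.smul_def]
  exact N.smul_mem _ (mem_of_lt _ fun i => Nat.mod_lt _ hn)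

section Toeplitz

variable {R : Type*} [CommRing R]

/-- The Toeplitz determinant `det (c_{1+j-i})` of size `p`, expressing the complete symmetric
function of degree `p` through the elementary ones. -/
def toeplitzDet (c : ℤ → R) (p : ℕ) : R :=
  (Matrix.of fun i j : Fin p => c (1 + (j : ℤ) - (i : ℤ))).det

-- Expanding along the first column, which is `(1, 0, …, 0)` unless `j = 0`, lowers `p` and `j`.
lemma det_toeplitz_submatrix_succ_succAbove {c : ℤ → R} (hc : c 0 = 1) (hneg : ∀ i < 0, c i = 0)
    (p : ℕ) (j : Fin (p + 1)) :
    ((Matrix.of fun i j : Fin (p + 1) => c (1 + (j : ℤ) - (i : ℤ))).submatrix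
      Fin.succ j.succAbove).det = toeplitzDet c (p - j) := by
  induction p with
  | zero =>
    obtain rfl : j = 0 := Fin.fin_one_eq_zero j
    simp [toeplitzDet]
  | succ p ih =>
    cases j using Fin.cases with
    | zero =>
      simp only [Matrix.submatrix, Fin.zero_succAbove, Matrix.of_apply, Fin.val_succ,
        Nat.cast_add, Nat.cast_one, ← add_assoc, add_sub_add_right_eq_sub, toeplitzDet,
        Fin.val_zero, Nat.sub_zero]
      rfl
    | succ j =>
      rw [Matrix.det_succ_column_zero, Finset.sum_eq_single 0]
      · simp [hc, ← ih j, Matrix.submatrix, ← add_assoc]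
      · intro i _ hi
        have : (i : ℕ) ≠ 0 := Fin.val_ne_zero_iff.mpr hi
        simp [hneg (-(i : ℤ)) (by omega)]
      · simp

theorem toeplitzDet_succ {c : ℤ → R} (hc : c 0 = 1) (hneg : ∀ i < 0, c i = 0) (p : ℕ) :
    toeplitzDet c (p + 1) =
      ∑ j ∈ Finset.range (p + 1), (-1) ^ j * c (j + 1) * toeplitzDet c (p - j) := by
  rw [toeplitzDet, Matrix.det_succ_row_zero, Finset.sum_range]
  refine Finset.sum_congr rfl fun j _ => ?_
  rw [det_toeplitz_submatrix_succ_succAbove hc hneg]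
  simp [add_comm]

end Toeplitz

section Recurrence

open scoped Matrix

variable {R : Type*} [CommRing R]

/-- The infinite Hankel matrix `(u (p + j))` of a sequence, with `m` columns. -/
def hankel (m : ℕ) (u : ℕ → R) : Matrix ℕ (Fin m) R := Matrix.of fun p j => u (p + j)

/-- The solution of a linear recurrence with initial values `0, …, 0, 1`. -/
structure IsFundamentalSolution (E : LinearRecurrence R) (h : ℕ → R) : Prop where
  isSolution : E.IsSolution h
  eq_zero : ∀ i, i + 1 < E.order → h i = 0
  eq_one : ∀ i, i + 1 = E.order → h i = 1

/-- The exponents `(m - 1, …, 1, 0)`. -/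
def staircase (m : ℕ) : Fin m → ℕ := fun i => i.rev

lemma isSolution_shift {E : LinearRecurrence R} {u : ℕ → R} (hu : E.IsSolution u)
    (r : ℕ) : E.IsSolution fun p => u (p + r) := fun p => by
  simpa only [add_right_comm] using hu (p + r)

namespace IsFundamentalSolution

variable {E : LinearRecurrence R} {h : ℕ → R}

lemma rowMinor_hankel_eq_prod (hh : IsFundamentalSolution E h) {b : Fin E.order → ℕ}
    (hb : ∀ i : Fin E.order, (i : ℕ) ≠ 0 → b i = staircase _ i) :
    rowMinor (hankel _ h) b = ∏ i, h (b i + i) := by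
  refine Matrix.det_of_isUpperTriangular fun i j hji => hh.eq_zero _ ?_
  have hji : (j : ℕ) < i := hji
  simp only [id, hb i (by omega), staircase, Fin.val_rev]
  omega

lemma rowMinor_hankel_staircase (hh : IsFundamentalSolution E h) :
    rowMinor (hankel _ h) (staircase E.order) = 1 := by
  rw [hh.rowMinor_hankel_eq_prod fun _ _ => rfl]
  refine Finset.prod_eq_one fun i _ => hh.eq_one _ ?_
  simp only [staircase, Fin.val_rev]
  omega

lemma rowMinor_hankel_update_staircase (hh : IsFundamentalSolution E h) [NeZero E.order] (p : ℕ) :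
    rowMinor (hankel _ h) (Function.update (staircase E.order) 0 p) = h p := by
  rw [hh.rowMinor_hankel_eq_prod fun i hi =>
    Function.update_of_ne (Fin.val_ne_zero_iff.mp hi) _ _, Finset.prod_eq_single 0]
  · simp
  · intro i _ hi
    rw [Function.update_of_ne hi]
    refine hh.eq_one _ ?_
    simp only [staircase, Fin.val_rev]
    omega
  · simp

lemma isUnit_hankel (hh : IsFundamentalSolution E h) :
    IsUnit (Matrix.of fun i j : Fin E.order => h (i + j)) := by
  rw [← Matrix.isUnit_submatrix_equiv Fin.revPerm (Equiv.refl _), Matrix.isUnit_iff_isUnit_det]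
  exact IsUnit.of_mul_eq_one 1 ((mul_one _).trans hh.rowMinor_hankel_staircase)

theorem exists_hankel_mulVec_eq (hh : IsFundamentalSolution E h) {u : ℕ → R}
    (hu : E.IsSolution u) : ∃ w, hankel E.order h *ᵥ w = u := by
  obtain ⟨w, hw⟩ := Matrix.mulVec_surjective_iff_isUnit.mpr hh.isUnit_hankel fun i => u i
  have hsol : hankel E.order h *ᵥ w ∈ E.solSpace := by
    simp only [Matrix.mulVec_eq_sum, op_smul_eq_smul]
    exact sum_mem fun j _ => Submodule.smul_mem _ _ (isSolution_shift hh.isSolution j)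
  refine ⟨w, (E.eq_iff_eqOn_range_order _ _ hsol hu).mpr fun i hi => ?_⟩
  exact congrFun hw ⟨i, Finset.mem_range.mp hi⟩

theorem exists_rowMinor_eq_mul (hh : IsFundamentalSolution E h) {A : Matrix ℕ (Fin E.order) R}
    (hA : ∀ l, E.IsSolution fun p => A p l) :
    ∃ W, ∀ b, rowMinor A b = rowMinor (hankel _ h) b * W := by
  choose w hw using fun l => hh.exists_hankel_mulVec_eq (hA l)
  let G : Matrix (Fin E.order) (Fin E.order) R := Matrix.of fun j l => w l j
  have hmul : A = hankel E.order h * G := by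
    ext p l
    exact (congrFun (hw l) p).symm
  exact ⟨G.det, fun b => by rw [hmul, rowMinor_mul]⟩

theorem apply_add_eq_mul (hh : IsFundamentalSolution E h) {n : ℕ} {s : R}
    (hs : ∀ p < E.order, h (p + n) = s * h p) (p : ℕ) : h (p + n) = s * h p :=
  congrFun ((E.eq_iff_eqOn_range_order _ (s • h)
    (isSolution_shift hh.isSolution n)
    (E.solSpace.smul_mem s hh.isSolution)).mpr fun i hi => hs i (Finset.mem_range.mp hi)) p

end IsFundamentalSolution

/-- The recurrence `u (p + m) - c₁ u (p + m - 1) + ⋯ + (-1)ᵐ cₘ u p = 0`. -/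
def alternatingRecurrence (m : ℕ) (c : ℕ → R) : LinearRecurrence R where
  order := m
  coeffs i := (-1) ^ (i.rev : ℕ) * c (i.rev + 1)

lemma isSolution_alternatingRecurrence_iff {m : ℕ} {c u : ℕ → R} :
    (alternatingRecurrence m c).IsSolution u ↔
      ∀ p, u (p + m) = ∑ i : Fin m, (-1) ^ (i : ℕ) * c (i + 1) * u (p + i.rev) := by
  refine forall_congr' fun p => Eq.congr_right ?_
  refine Fintype.sum_equiv (Fin.revPerm (n := m)) _ _ fun i => ?_
  rw [Fin.revPerm_apply, Fin.rev_rev]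
  rfl

lemma IsFundamentalSolution.map {T : Type*} [CommRing T] {m : ℕ} {c h : ℕ → R}
    (hh : IsFundamentalSolution (alternatingRecurrence m c) h) (φ : R →+* T) :
    IsFundamentalSolution (alternatingRecurrence m fun r => φ (c r)) fun p => φ (h p) where
  isSolution := isSolution_alternatingRecurrence_iff.mpr fun p => by
    rw [isSolution_alternatingRecurrence_iff.mp hh.isSolution p]
    simp
  eq_zero i hi := by rw [hh.eq_zero i hi, map_zero]
  eq_one i hi := by rw [hh.eq_one i hi, map_one]

end Recurrence

section Sigma

variable {m : ℕ}

lemma cVar_zero : cVar m 0 = 1 := by simp [cVar]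

lemma cVar_of_neg {i : ℤ} (hi : i < 0) : cVar m i = 0 := by
  rw [cVar, dif_neg (by omega), if_neg (by omega)]

lemma cVar_of_lt {i : ℤ} (hi : m < i) : cVar m i = 0 := by
  rw [cVar, dif_neg (by omega), if_neg (by omega)]

lemma cVar_succ (i : Fin m) : cVar m (i + 1) = MvPolynomial.X i := by
  rw [cVar, dif_pos (by omega)]
  congr
  omega

lemma sigmaP_of_neg {p : ℤ} (hp : p < 0) : sigmaP m p = 0 := if_pos hp

lemma sigmaP_natCast (p : ℕ) : sigmaP m p = toeplitzDet (cVar m) p := if_neg (by omega)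

lemma sigmaP_zero : sigmaP m 0 = 1 := by simp [sigmaP]

lemma sigmaP_succ (p : ℕ) :
    sigmaP m (p + 1) = ∑ i : Fin m, (-1) ^ (i : ℕ) * cVar m (i + 1) * sigmaP m (p - i) := by
  let term (j : ℕ) := (-1) ^ j * cVar m (j + 1) * sigmaP m (p - j)
  calc sigmaP m (p + 1) = ∑ j ∈ Finset.range (p + 1), term j := by
        rw [← Nat.cast_succ, sigmaP_natCast, toeplitzDet_succ cVar_zero fun _ => cVar_of_neg]
        refine Finset.sum_congr rfl fun j hj => ?_
        rw [← sigmaP_natCast, Nat.cast_sub (Finset.mem_range_succ_iff.mp hj)]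
    _ = ∑ j ∈ Finset.range (max (p + 1) m), term j :=
        (Finset.eventually_constant_sum
          (fun j hj => by simp only [term, sigmaP_of_neg (show (p - j : ℤ) < 0 by omega), mul_zero])
          (le_max_left _ _)).symm
    _ = ∑ j ∈ Finset.range m, term j :=
        Finset.eventually_constant_sum
          (fun j hj => by
            simp only [term, cVar_of_lt (show (m : ℤ) < j + 1 by omega), mul_zero, zero_mul])
          (le_max_right _ _)
    _ = _ := Finset.sum_range term

/-- The sequence `σ` preceded by `m - 1` zeros. The shift makes it a fundamental solution, with
initial values at `0, …, m - 1`. -/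
noncomputable def shiftedSigma (m : ℕ) : ℕ → MvPolynomial (Fin m) ℚ :=
  fun p => sigmaP m (p - (m - 1 : ℤ))

lemma shiftedSigma_isFundamentalSolution (m : ℕ) :
    IsFundamentalSolution (alternatingRecurrence m fun r => cVar m r) (shiftedSigma m) where
  isSolution := isSolution_alternatingRecurrence_iff.mpr fun p => by
    rw [shiftedSigma, show ((p + m : ℕ) - (m - 1 : ℤ)) = p + 1 by omega, sigmaP_succ]
    refine Finset.sum_congr rfl fun i _ => ?_
    rw [shiftedSigma, show ((p + i.rev : ℕ) - (m - 1 : ℤ)) = p - i by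
      rw [Fin.val_rev]; omega, Nat.cast_succ]
  eq_zero i (hi : i + 1 < m) := sigmaP_of_neg (by omega)
  eq_one i (hi : i + 1 = m) := by
    rw [shiftedSigma, show (i - (m - 1 : ℤ)) = 0 by omega, sigmaP_zero]

/-- The maximal minors of the Hankel matrix of `σ`; these are the `σ_λ`, indexed by `λ` shifted by
the staircase and extended to arbitrary exponents. -/
noncomputable def sigmaMinor (b : Fin m → ℕ) : MvPolynomial (Fin m) ℚ :=
  rowMinor (hankel m (shiftedSigma m)) b

lemma sigmaL_eq_sigmaMinor (lam : Fin m → ℕ) : sigmaL m lam = sigmaMinor (lam + staircase m) := by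
  rw [sigmaL, sigmaMinor, rowMinor]
  congr 1
  ext1 i j
  simp only [Matrix.of_apply, Matrix.submatrix_apply, hankel, shiftedSigma, staircase, id,
    Pi.add_apply, Fin.val_rev]
  congr 1
  omega

lemma sigmaMinor_staircase : sigmaMinor (staircase m) = 1 :=
  (shiftedSigma_isFundamentalSolution m).rowMinor_hankel_staircase

lemma sigmaMinor_update_staircase [hm : NeZero m] (p : ℕ) :
    sigmaMinor (Function.update (staircase m) 0 p) = shiftedSigma m p :=
  have : NeZero (alternatingRecurrence m fun r => cVar m r).order := hm
  (shiftedSigma_isFundamentalSolution m).rowMinor_hankel_update_staircase p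

end Sigma

section Alternant

variable {m : ℕ} {R : Type*} [CommRing R]

lemma isSolution_pow (x : Fin m → R) (l : Fin m) :
    (alternatingRecurrence m (Finset.univ.val.map x).esymm).IsSolution fun p => x l ^ p := by
  have root := congrArg (Polynomial.eval (x l))
    (Multiset.prod_X_sub_X_eq_sum_esymm (Finset.univ.val.map x))
  rw [Polynomial.eval_multiset_prod, Multiset.prod_eq_zero
      (by simp [sub_eq_zero]), Polynomial.eval_finsetSum, Multiset.card_map,
    Finset.card_val, Finset.card_fin, Finset.sum_range_succ', Finset.sum_range] at root
  have esymm_zero (s : Multiset R) : s.esymm 0 = 1 := by simp [Multiset.esymm]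
  simp only [esymm_zero, pow_succ, Polynomial.eval_mul, Polynomial.eval_pow,
    Polynomial.eval_neg, Polynomial.eval_one, Polynomial.eval_C, Polynomial.eval_X, mul_neg,
    mul_one, neg_mul, Finset.sum_neg_distrib, pow_zero, one_mul, tsub_zero] at root
  refine isSolution_alternatingRecurrence_iff.mpr fun p => ?_
  simp only [pow_add (x l) p, Fin.val_rev, mul_left_comm _ (x l ^ p), mul_assoc, ← Finset.mul_sum]
  linear_combination -x l ^ p * root

/-- The infinite Vandermonde matrix. Its minors are the alternants of `x`. -/
def powerMatrix {ι : Type*} (x : ι → R) : Matrix ℕ ι R := Matrix.of fun p l => x l ^ p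

lemma esymm_mul_rowMinor_powerMatrix {ι : Type*} [Fintype ι] [DecidableEq ι] (x : ι → R)
    (b : ι → ℕ) (r : ℕ) :
    (∑ t ∈ Finset.univ.powersetCard r, ∏ i ∈ t, x i) * rowMinor (powerMatrix x) b =
      ∑ t ∈ Finset.univ.powersetCard r,
        rowMinor (powerMatrix x) fun i => b i + if i ∈ t then 1 else 0 := by
  simp only [rowMinor, powerMatrix, Matrix.det_apply', Matrix.submatrix_apply, Matrix.of_apply, id]
  rw [Finset.sum_comm, Finset.mul_sum]
  refine Finset.sum_congr rfl fun π _ => ?_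
  rw [← Finset.mul_sum, mul_left_comm, Finset.sum_mul]
  refine congrArg _ (Finset.sum_equiv π.finsetCongr (by simp) fun t _ => ?_)
  simp only [pow_add, Finset.prod_mul_distrib]
  simp [pow_ite, mul_comm]

end Alternant

section Symmetrization

open MvPolynomial

variable {m : ℕ} (K : Type*) [CommRing K] [Algebra ℚ K]

/-- The map `c_i ↦ e_i(x_1, …, x_m)`, identifying `S` with the symmetric polynomials when
`K = ℚ`. -/
noncomputable def symmetrize (m : ℕ) : MvPolynomial (Fin m) ℚ →ₐ[ℚ] MvPolynomial (Fin m) K :=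
  aeval fun i => esymm (Fin m) K (i + 1)

lemma symmetrize_cVar (r : ℕ) : symmetrize K m (cVar m r) = esymm (Fin m) K r := by
  obtain rfl | r := r
  · simp [cVar_zero]
  obtain hr | hr := lt_or_ge r m
  · simpa [symmetrize] using congrArg (symmetrize K m) (cVar_succ ⟨r, hr⟩)
  · rw [cVar_of_lt (by omega), map_zero, esymm, Finset.powersetCard_eq_empty.mpr
      (by simpa using by omega), Finset.sum_empty]

lemma symmetrize_rat_injective : Function.Injective (symmetrize ℚ m) := fun p q h =>
  esymmAlgHom_fin_injective ℚ le_rfl <| Subtype.ext <| by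
    simpa only [symmetrize, esymmAlgHom_apply] using h

-- Both sides solve the recurrence with coefficients `e_i`, of which `σ` is the fundamental
-- solution; hence the alternant matrix is the Hankel matrix times a matrix of determinant `W`.
theorem exists_rowMinor_powerMatrix_eq [IsDomain K] :
    ∃ W : MvPolynomial (Fin m) K, W ≠ 0 ∧
      ∀ b, rowMinor (powerMatrix X) b = symmetrize K m (sigmaMinor b) * W := by
  have hfund := (shiftedSigma_isFundamentalSolution m).map (symmetrize K m).toRingHom
  simp only [AlgHom.toRingHom_eq_coe, RingHom.coe_coe, symmetrize_cVar,
    esymm_eq_multiset_esymm] at hfund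
  obtain ⟨W, hW⟩ := hfund.exists_rowMinor_eq_mul (A := powerMatrix X)
    (isSolution_pow X)
  have bialternant (b : Fin m → ℕ) :
      rowMinor (powerMatrix X) b = symmetrize K m (sigmaMinor b) * W :=
    (hW b).trans (congrArg (· * W) (map_rowMinor (symmetrize K m).toRingHom _ b).symm)
  refine ⟨W, ?_, bialternant⟩
  rintro rfl
  have vandermonde := bialternant Fin.val
  rw [mul_zero, rowMinor, ← Matrix.det_transpose] at vandermonde
  exact Matrix.det_vandermonde_ne_zero_iff.mpr X_injective vandermonde

theorem cVar_mul_sigmaMinor (r : ℕ) (b : Fin m → ℕ) :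
    cVar m r * sigmaMinor b =
      ∑ t ∈ Finset.univ.powersetCard r, sigmaMinor fun i => b i + if i ∈ t then 1 else 0 := by
  obtain ⟨W, hW0, hW⟩ := exists_rowMinor_powerMatrix_eq (m := m) ℚ
  refine symmetrize_rat_injective (mul_right_cancel₀ hW0 ?_)
  simp only [map_mul, map_sum, Finset.sum_mul, mul_assoc, ← hW, symmetrize_cVar]
  exact esymm_mul_rowMinor_powerMatrix X b r

end Symmetrization

section Partition

/-- The partitions `λ ⊆ m × k`, padded with zeros to `m` parts. -/
def boxPartitions (m k : ℕ) : Finset (Fin m → ℕ) :=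
  (Fintype.piFinset fun _ => Finset.range (k + 1)).filter fun lam => ∀ i j, i ≤ j → lam j ≤ lam i

variable {m k : ℕ}

lemma mem_boxPartitions {lam : Fin m → ℕ} :
    lam ∈ boxPartitions m k ↔ (∀ i, lam i ≤ k) ∧ Antitone lam := by
  simp [boxPartitions, Antitone]

lemma antitone_add_val {b : Fin m → ℕ} (hb : StrictAnti b) : Antitone fun i => b i + i := by
  cases m with
  | zero => exact Subsingleton.antitone _
  | succ m =>
    refine Fin.antitone_iff_succ_le.mpr fun i => ?_
    have : b i.succ < b i.castSucc := hb i.castSucc_lt_succ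
    simp only [Fin.val_succ, Fin.val_castSucc]
    omega

lemma staircase_strictAnti (m : ℕ) : StrictAnti (staircase m) := Fin.rev_strictAnti

lemma strictAnti_add_staircase {lam : Fin m → ℕ} (hlam : lam ∈ boxPartitions m k) :
    StrictAnti (lam + staircase m) :=
  (mem_boxPartitions.mp hlam).2.add_strictAnti (staircase_strictAnti m)

lemma add_staircase_lt {lam : Fin m → ℕ} (hlam : lam ∈ boxPartitions m k) (i : Fin m) :
    (lam + staircase m) i < m + k := by
  have := (mem_boxPartitions.mp hlam).1 i
  simp only [Pi.add_apply, staircase, Fin.val_rev]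
  omega

lemma exists_add_staircase_eq {b : Fin m → ℕ} (hb : StrictAnti b) (hlt : ∀ i, b i < m + k) :
    ∃ lam ∈ boxPartitions m k, lam + staircase m = b := by
  have le_top (i : Fin m) : b i + i < m + k :=
    (antitone_add_val hb (show ⟨0, i.pos⟩ ≤ i from Nat.zero_le i)).trans_lt (hlt _)
  have staircase_le : staircase m ≤ b := fun i => by
    have : b _ + (m - 1) ≤ b i + i := antitone_add_val hb
      (show i ≤ ⟨m - 1, Nat.sub_one_lt_of_lt i.isLt⟩ from Nat.le_sub_one_of_lt i.isLt)
    simp only [staircase, Fin.val_rev]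
    omega
  refine ⟨b - staircase m, mem_boxPartitions.mpr ⟨fun i => ?_, fun i j hij => ?_⟩,
    tsub_add_cancel_of_le staircase_le⟩
  · have := le_top i
    simp only [Pi.sub_apply, staircase, Fin.val_rev]
    omega
  · have : (i : ℕ) ≤ j := hij
    have : b j + j ≤ b i + i := antitone_add_val hb hij
    simp only [Pi.sub_apply, staircase, Fin.val_rev]
    omega

end Partition

section Presentation

open Polynomial

variable {m : ℕ}

/-- The element `(-1)ᵐ α q` of `ℚ[q]`, so that `σₙ = -(-1)ᵐ α q` in `QH_α`. -/
noncomputable def quantumParameter (m : ℕ) (α : ℚ) : ℚ[X] := (-1) ^ m * C α * X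

/-- The action of `ℚ[q]` on `S[q]`. -/
noncomputable instance polynomialAlgebra : Algebra ℚ[X] (MvPolynomial (Fin m) ℚ)[X] :=
  Polynomial.algebra ℚ (MvPolynomial (Fin m) ℚ)

lemma algebraMap_eq_map (p : ℚ[X]) :
    algebraMap ℚ[X] (MvPolynomial (Fin m) ℚ)[X] p = p.map MvPolynomial.C :=
  rfl

lemma algebraMap_quantumParameter (α : ℚ) :
    algebraMap ℚ[X] (MvPolynomial (Fin m) ℚ)[X] (quantumParameter m α) =
      (-1) ^ m * C (MvPolynomial.C α) * X := by
  simp [quantumParameter]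

/-- The generators of the ideal of `QH_α` in a uniform shape: since `shiftedSigma` starts with
`0, …, 0, 1`, the second term is only present in the last one. -/
noncomputable def qhGenerator (m k : ℕ) (α : ℚ) (e : ℕ) : (MvPolynomial (Fin m) ℚ)[X] :=
  C (shiftedSigma m (e + (m + k))) + quantumParameter m α • C (shiftedSigma m e)

lemma qhGenerator_of_lt (k : ℕ) (α : ℚ) {e : ℕ} (he : e + 1 < m) :
    qhGenerator m k α e = C (sigmaP m (k + 1 + e)) := by
  rw [qhGenerator, (shiftedSigma_isFundamentalSolution m).eq_zero e he, C_0, smul_zero, add_zero,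
    shiftedSigma]
  congr 2
  omega

lemma qhGenerator_of_eq (k : ℕ) (α : ℚ) {e : ℕ} (he : e + 1 = m) :
    qhGenerator m k α e =
      C (sigmaP m (m + k)) + (-1) ^ m * C (MvPolynomial.C α) * X := by
  rw [qhGenerator, (shiftedSigma_isFundamentalSolution m).eq_one e he, C_1, Algebra.smul_def,
    mul_one, algebraMap_quantumParameter, shiftedSigma]
  congr 3
  omega

lemma qhIdeal_eq_span [NeZero m] (k : ℕ) (α : ℚ) :
    qhIdeal m k α = Ideal.span (Set.range fun e : Fin m => qhGenerator m k α e) := by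
  have hm : 0 < m := Nat.pos_of_ne_zero (NeZero.ne m)
  rw [qhIdeal]
  congr 1
  ext y
  constructor
  · rintro (⟨p, hp, rfl⟩ | rfl)
    · obtain ⟨hkp, hpn⟩ := hp
      refine ⟨⟨(p - k - 1).toNat, by omega⟩, ?_⟩
      dsimp only
      rw [qhGenerator_of_lt _ _ (by omega)]
      congr 2
      omega
    · exact ⟨⟨m - 1, by omega⟩, qhGenerator_of_eq k α (by simp only; omega)⟩
  · rintro ⟨e, rfl⟩
    obtain he | he := lt_or_eq_of_le (Nat.succ_le_of_lt e.isLt)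
    · exact Or.inl ⟨k + 1 + e, ⟨by omega, by omega⟩, (qhGenerator_of_lt k α he).symm⟩
    · exact Or.inr (qhGenerator_of_eq k α he)

end Presentation

section Spanning

open Polynomial

variable {m k : ℕ} {α : ℚ}

lemma span_range_sigmaMinor :
    Submodule.span ℚ (Set.range (sigmaMinor : (Fin m → ℕ) → MvPolynomial (Fin m) ℚ)) = ⊤ := by
  refine Submodule.eq_top_iff'.mpr fun p => ?_
  induction p using MvPolynomial.induction_on with
  | C a =>
    rw [← mul_one (MvPolynomial.C a), ← MvPolynomial.smul_eq_C_mul, ← sigmaMinor_staircase]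
    exact Submodule.smul_mem _ a (Submodule.subset_span (Set.mem_range_self _))
  | add p q hp hq => exact add_mem hp hq
  | mul_X p i hp =>
    rw [mul_comm, ← cVar_succ, ← Nat.cast_succ]
    suffices Submodule.span ℚ (Set.range sigmaMinor) ≤
        (Submodule.span ℚ (Set.range sigmaMinor)).comap
          (LinearMap.mulLeft ℚ (cVar m ((i + 1 : ℕ) : ℤ))) from this hp
    refine Submodule.span_le.mpr ?_
    rintro _ ⟨b, rfl⟩
    rw [SetLike.mem_coe, Submodule.mem_comap, LinearMap.mulLeft_apply, cVar_mul_sigmaMinor]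
    exact sum_mem fun t _ => Submodule.subset_span (Set.mem_range_self _)

lemma map_sigmaMinor_mem {K T : Type*} [CommRing K] [CommRing T] [Algebra K T]
    (φ : MvPolynomial (Fin m) ℚ →+* T) {n : ℕ} (hn : 0 < n) {a : K}
    (hφ : ∀ e < m, φ (shiftedSigma m (e + n)) = a • φ (shiftedSigma m e)) {N : Submodule K T}
    (hN : ∀ b, StrictAnti b → (∀ i, b i < n) → φ (sigmaMinor b) ∈ N) (b : Fin m → ℕ) :
    φ (sigmaMinor b) ∈ N := by
  have map_eq (b : Fin m → ℕ) :
      φ (sigmaMinor b) = rowMinor (hankel m fun p => φ (shiftedSigma m p)) b :=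
    map_rowMinor φ _ b
  simp only [map_eq] at hN ⊢
  refine rowMinor_mem_of_strictAnti_mem hn (a := a) (fun p => ?_) hN b
  ext j
  simp only [hankel, Matrix.of_apply, Pi.smul_apply, Algebra.smul_def] at hφ ⊢
  rw [add_right_comm]
  exact ((shiftedSigma_isFundamentalSolution m).map φ).apply_add_eq_mul hφ (p + j)

/-- The ring `QH_α`. -/
abbrev QH (m k : ℕ) (α : ℚ) : Type := (MvPolynomial (Fin m) ℚ)[X] ⧸ qhIdeal m k α

/-- The class of `σ_λ` in `QH_α`. -/
noncomputable def sigmaClass (m k : ℕ) (α : ℚ) (lam : Fin m → ℕ) : QH m k α :=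
  Ideal.Quotient.mk _ (C (sigmaL m lam))

lemma mk_shiftedSigma_add_eq_smul [NeZero m] {e : ℕ} (he : e < m) :
    Ideal.Quotient.mk (qhIdeal m k α) (C (shiftedSigma m (e + (m + k)))) =
      -quantumParameter m α • Ideal.Quotient.mk (qhIdeal m k α) (C (shiftedSigma m e)) := by
  have mem : qhGenerator m k α e ∈ qhIdeal m k α :=
    qhIdeal_eq_span (m := m) k α ▸ Ideal.subset_span ⟨⟨e, he⟩, rfl⟩
  rw [neg_smul]
  exact eq_neg_of_add_eq_zero_left (Ideal.Quotient.eq_zero_iff_mem.mpr mem)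

lemma mk_sigmaMinor_mem_span [NeZero m] (b : Fin m → ℕ) :
    Ideal.Quotient.mk (qhIdeal m k α) (C (sigmaMinor b)) ∈
      Submodule.span ℚ[X] (sigmaClass m k α '' boxPartitions m k) := by
  refine map_sigmaMinor_mem (T := QH m k α) ((Ideal.Quotient.mk _).comp C) (n := m + k)
    (Nat.add_pos_left (NeZero.pos m) k) (fun e he => mk_shiftedSigma_add_eq_smul he)
    (fun b hb hlt => ?_) b
  obtain ⟨lam, hlam, rfl⟩ := exists_add_staircase_eq hb hlt
  rw [← sigmaL_eq_sigmaMinor]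
  exact Submodule.subset_span ⟨lam, hlam, rfl⟩

theorem span_sigmaClass_eq_top [NeZero m] :
    Submodule.span ℚ[X] (sigmaClass m k α '' boxPartitions m k) = ⊤ := by
  have mk_C_mem (s : MvPolynomial (Fin m) ℚ) : Ideal.Quotient.mk (qhIdeal m k α) (C s) ∈
      Submodule.span ℚ[X] (sigmaClass m k α '' boxPartitions m k) := by
    have hs : s ∈ Submodule.span ℚ (Set.range sigmaMinor) := span_range_sigmaMinor ▸ trivial
    induction hs using Submodule.span_induction with
    | mem _ h => obtain ⟨b, rfl⟩ := h; exact mk_sigmaMinor_mem_span b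
    | zero => simp
    | add s t _ _ hs ht => rw [map_add, map_add]; exact add_mem hs ht
    | smul a s _ hs =>
      have smul_eq : (C (a • s) : (MvPolynomial (Fin m) ℚ)[X]) = (C a : ℚ[X]) • C s := by
        rw [Algebra.smul_def (C a : ℚ[X]), algebraMap_eq_map, map_C, ← C_mul,
          MvPolynomial.smul_eq_C_mul]
      rw [smul_eq]
      exact Submodule.smul_mem _ (C a) hs
  refine Submodule.eq_top_iff'.mpr fun x => ?_
  obtain ⟨y, rfl⟩ := Ideal.Quotient.mk_surjective x
  induction y using Polynomial.induction_on' with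
  | add p q hp hq => rw [map_add]; exact add_mem hp hq
  | monomial i s =>
    have monomial_eq : monomial i s = (X ^ i : ℚ[X]) • C s := by
      rw [Algebra.smul_def, algebraMap_eq_map, Polynomial.map_pow, map_X,
        X_pow_mul, C_mul_X_pow_eq_monomial]
    rw [monomial_eq]
    exact Submodule.smul_mem _ (X ^ i) (mk_C_mem s)

end Spanning

section BinomialIdeal

open MvPolynomial

variable {ι K : Type*} [CommRing K] {n : ℕ} {s : K}

/-- The ideal of the relations `x_lⁿ = s`. -/
noncomputable def binomialIdeal (ι : Type*) {K : Type*} [CommRing K] (n : ℕ) (s : K) :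
    Ideal (MvPolynomial ι K) :=
  Ideal.span (Set.range fun l => X l ^ n - C s)

lemma rowMinor_update_add_sub_mem_binomialIdeal [Fintype ι] [DecidableEq ι] (b : ι → ℕ) (i : ι)
    (e : ℕ) :
    rowMinor (powerMatrix X) (Function.update b i (e + n)) -
      C s * rowMinor (powerMatrix X) (Function.update b i e) ∈ binomialIdeal ι n s := by
  refine (Ideal.Quotient.mk_eq_mk_iff_sub_mem _ _).mp ?_
  rw [map_mul, map_rowMinor, map_rowMinor]
  refine rowMinor_update_of_row_eq_smul ?_ b i
  ext l
  have mem : X l ^ (e + n) - C s * X l ^ e ∈ binomialIdeal ι n s := by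
    rw [pow_add, mul_comm (C s), ← mul_sub]
    exact Ideal.mul_mem_left _ _ (Ideal.subset_span ⟨l, rfl⟩)
  have mk_eq := (Ideal.Quotient.mk_eq_mk_iff_sub_mem _ _).mpr mem
  rwa [map_mul] at mk_eq

/-- The linear functional `∏ x_l ^ μ_l ↦ ∏ w_l(μ_l)`. -/
noncomputable def productFunctional [Fintype ι] (w : ι → ℕ → K) : MvPolynomial ι K →ₗ[K] K :=
  (basisMonomials ι K).constr K fun μ => ∏ l, w l (μ l)

lemma productFunctional_monomial [Fintype ι] (w : ι → ℕ → K) (μ : ι →₀ ℕ) (r : K) :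
    productFunctional w (monomial μ r) = r * ∏ l, w l (μ l) := by
  have monomial_eq : monomial μ r = r • basisMonomials ι K μ := by simp [smul_monomial]
  rw [monomial_eq, map_smul, productFunctional, Module.Basis.constr_basis, smul_eq_mul]

lemma productFunctional_rowMinor [Fintype ι] [DecidableEq ι] (w : ι → ℕ → K) (b : ι → ℕ) :
    productFunctional w (rowMinor (powerMatrix X) b) =
      (Matrix.of fun i l => w l (b i)).det := by
  rw [rowMinor, Matrix.det_apply, Matrix.det_apply, map_sum]
  refine Finset.sum_congr rfl fun π _ => ?_
  have prod_eq : ∏ l, (powerMatrix X).submatrix b id (π l) l =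
      (monomial (Finsupp.equivFunOnFinite.symm (b ∘ π)) 1 : MvPolynomial ι K) := by
    rw [monomial_eq, Finsupp.prod_fintype _ _ fun _ => pow_zero _, C_1, one_mul]
    rfl
  rw [prod_eq, Units.smul_def, map_zsmul, productFunctional_monomial, one_mul]
  rfl

lemma productFunctional_eq_zero_of_mem [Fintype ι] {w : ι → ℕ → K}
    (hw : ∀ l e, w l (e + n) = s * w l e) {y : MvPolynomial ι K} (hy : y ∈ binomialIdeal ι n s) :
    productFunctional w y = 0 := by
  classical
  suffices ∀ z, productFunctional w (z * y) = 0 by simpa only [one_mul] using this 1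
  induction hy using Submodule.span_induction with
  | mem _ h =>
    obtain ⟨l, rfl⟩ := h
    intro z
    induction z using MvPolynomial.induction_on' with
    | monomial μ r =>
      have prod_add_single : ∏ i, w i ((μ + Finsupp.single l n) i) = s * ∏ i, w i (μ i) := by
        rw [← Finset.mul_prod_erase _ _ (Finset.mem_univ l),
          ← Finset.mul_prod_erase _ _ (Finset.mem_univ l), ← mul_assoc, ← hw]
        refine congrArg₂ _ (by simp) (Finset.prod_congr rfl fun i hi => ?_)
        simp [(Finset.ne_of_mem_erase hi).symm]
      rw [mul_sub, X_pow_eq_monomial, monomial_mul, C_apply, monomial_mul, map_sub, add_zero,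
        productFunctional_monomial, productFunctional_monomial, prod_add_single]
      ring
    | add p q hp hq => rw [add_mul, map_add, hp, hq, add_zero]
  | zero => simp
  | add x y _ _ hx hy => intro z; rw [mul_add, map_add, hx, hy, add_zero]
  | smul t x _ hx => intro z; rw [smul_eq_mul, ← mul_assoc]; exact hx _

/-- The coefficient of `x^r` in the remainder of `x^e` modulo `xⁿ - s`. -/
def remainderCoeff (n : ℕ) (s : K) (r e : ℕ) : K := if e % n = r then s ^ (e / n) else 0

lemma remainderCoeff_add (hn : 0 < n) (r e : ℕ) :
    remainderCoeff n s r (e + n) = s * remainderCoeff n s r e := by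
  simp [remainderCoeff, Nat.add_div_right _ hn, pow_succ']

lemma remainderCoeff_of_lt {r e : ℕ} (he : e < n) :
    remainderCoeff n s r e = if e = r then 1 else 0 := by
  simp [remainderCoeff, Nat.mod_eq_of_lt he, Nat.div_eq_of_lt he]

lemma det_ite_eq_of_strictAnti {m : ℕ} {b c : Fin m → ℕ} (hb : StrictAnti b)
    (hc : StrictAnti c) :
    (Matrix.of fun i j => if b i = c j then 1 else 0 : Matrix (Fin m) (Fin m) K).det =
      if b = c then 1 else 0 := by
  split_ifs with hbc
  · subst hbc
    convert Matrix.det_one (n := Fin m) (R := K) using 2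
    ext i j
    simp [Matrix.one_apply, hb.injective.eq_iff]
  · obtain ⟨i, hi⟩ : ∃ i, ∀ j, b i ≠ c j := by
      by_contra! h
      have hrange : Set.range b ⊆ Set.range c := by
        rintro _ ⟨i, rfl⟩
        obtain ⟨j, hj⟩ := h i
        exact ⟨j, hj.symm⟩
      have hcard : (Set.range c).ncard ≤ (Set.range b).ncard := by
        rw [← Set.image_univ, ← Set.image_univ, Set.ncard_image_of_injective _ hb.injective,
          Set.ncard_image_of_injective _ hc.injective]
      exact hbc ((hb.range_inj hc).mp
        (Set.eq_of_subset_of_ncard_le hrange hcard (Set.finite_range c)))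
    exact Matrix.det_eq_zero_of_row_eq_zero i fun j => if_neg (hi j)

/-- The functional that reads off the coefficient of the monomial `∏ x_l ^ c_l` after reduction
modulo `binomialIdeal`. -/
noncomputable def remainderFunctional [Fintype ι] (n : ℕ) (s : K) (c : ι → ℕ) :
    MvPolynomial ι K →ₗ[K] K :=
  productFunctional fun l => remainderCoeff n s (c l)

lemma remainderFunctional_eq_zero_of_mem [Fintype ι] (hn : 0 < n) (c : ι → ℕ)
    {y : MvPolynomial ι K} (hy : y ∈ binomialIdeal ι n s) : remainderFunctional n s c y = 0 :=
  productFunctional_eq_zero_of_mem (fun _ => remainderCoeff_add hn _) hy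

lemma remainderFunctional_rowMinor {m : ℕ} {b c : Fin m → ℕ} (hb : StrictAnti b)
    (hlt : ∀ i, b i < n) (hc : StrictAnti c) :
    remainderFunctional n s c (rowMinor (powerMatrix X) b) = if b = c then 1 else 0 := by
  rw [remainderFunctional, productFunctional_rowMinor, ← det_ite_eq_of_strictAnti hb hc]
  simp only [remainderCoeff_of_lt (hlt _)]

end BinomialIdeal

section Independence

open Polynomial

variable {m k : ℕ} {α : ℚ}

/-- The extension of `symmetrize` to `S[q]`, with `q ↦ q`. -/
noncomputable def polynomialSymmetrize (m : ℕ) :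
    (MvPolynomial (Fin m) ℚ)[X] →+* MvPolynomial (Fin m) ℚ[X] :=
  eval₂RingHom (symmetrize ℚ[X] m).toRingHom (MvPolynomial.C X)

lemma polynomialSymmetrize_C (s : MvPolynomial (Fin m) ℚ) :
    polynomialSymmetrize m (C s) = symmetrize ℚ[X] m s :=
  eval₂_C _ _

lemma polynomialSymmetrize_smul (p : ℚ[X]) (y : (MvPolynomial (Fin m) ℚ)[X]) :
    polynomialSymmetrize m (p • y) = p • polynomialSymmetrize m y := by
  have comp_algebraMap : (polynomialSymmetrize m).comp (algebraMap ℚ[X] _) = MvPolynomial.C := by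
    refine Polynomial.ringHom_ext (fun a => ?_) ?_
    · rw [RingHom.comp_apply, algebraMap_eq_map, map_C, polynomialSymmetrize_C]
      exact (symmetrize ℚ[X] m).commutes a
    · rw [RingHom.comp_apply, algebraMap_eq_map, map_X]
      exact eval₂_X _ _
  rw [Algebra.smul_def, map_mul, MvPolynomial.smul_eq_C_mul, ← comp_algebraMap, RingHom.comp_apply]

lemma polynomialSymmetrize_mul_mem [NeZero m] {W : MvPolynomial (Fin m) ℚ[X]}
    (hW : ∀ b, rowMinor (powerMatrix MvPolynomial.X) b = symmetrize ℚ[X] m (sigmaMinor b) * W)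
    {y : (MvPolynomial (Fin m) ℚ)[X]} (hy : y ∈ qhIdeal m k α) :
    polynomialSymmetrize m y * W ∈ binomialIdeal (Fin m) (m + k) (-quantumParameter m α) := by
  rw [qhIdeal_eq_span] at hy
  induction hy using Submodule.span_induction with
  | mem _ h =>
    obtain ⟨e, rfl⟩ := h
    have mem := rowMinor_update_add_sub_mem_binomialIdeal (n := m + k)
      (s := -quantumParameter m α) (staircase m) 0 e
    simp only [hW, sigmaMinor_update_staircase] at mem
    convert mem using 1
    simp only [qhGenerator, map_add, polynomialSymmetrize_smul, polynomialSymmetrize_C,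
      MvPolynomial.smul_eq_C_mul, map_neg]
    ring
  | zero => simp
  | add x y _ _ hx hy => rw [map_add, add_mul]; exact add_mem hx hy
  | smul z x _ hx => rw [smul_eq_mul, map_mul, mul_assoc]; exact Ideal.mul_mem_left _ _ hx

theorem linearIndepOn_sigmaClass [NeZero m] :
    LinearIndepOn ℚ[X] (sigmaClass m k α) (boxPartitions m k : Set (Fin m → ℕ)) := by
  obtain ⟨W, -, hW⟩ := exists_rowMinor_powerMatrix_eq (m := m) ℚ[X]
  refine linearIndepOn_finset_iff.mpr fun f hf mu hmu => ?_
  let Θ := remainderFunctional (m + k) (-quantumParameter m α) (mu + staircase m)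
  have apply_sigmaL (lam) (hlam : lam ∈ boxPartitions m k) :
      Θ (polynomialSymmetrize m (f lam • C (sigmaL m lam)) * W) =
        if lam = mu then f lam else 0 := by
    rw [polynomialSymmetrize_smul, polynomialSymmetrize_C, smul_mul_assoc, sigmaL_eq_sigmaMinor,
      ← hW, map_smul, remainderFunctional_rowMinor (strictAnti_add_staircase hlam)
        (add_staircase_lt hlam) (strictAnti_add_staircase hmu)]
    simp
  have mem : ∑ lam ∈ boxPartitions m k, f lam • C (sigmaL m lam) ∈ qhIdeal m k α :=
    Ideal.Quotient.eq_zero_iff_mem.mp ((map_sum _ _ _).trans hf)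
  have apply_sum : Θ (polynomialSymmetrize m (∑ lam ∈ boxPartitions m k,
      f lam • C (sigmaL m lam)) * W) = 0 :=
    remainderFunctional_eq_zero_of_mem (Nat.add_pos_left (NeZero.pos m) k) _
      (polynomialSymmetrize_mul_mem hW mem)
  rwa [map_sum, Finset.sum_mul, map_sum, Finset.sum_congr rfl apply_sigmaL,
    Finset.sum_ite_eq' _ _ f, if_pos hmu] at apply_sum

end Independence

end QuantumSchubert

open scoped Classical in
/-- `QH_α` is a free `ℚ[q]`-module with basis `{σ_λ : λ ⊆ m × k}`: every element
has a unique expansion with coefficients in `ℚ[q]` (acting through the natural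
map `ℚ[q] → QH_α`) over the classes `σ_λ`, `λ ⊆ m × k`. -/
theorem qh_free_basis (m k : ℕ) (hm : 0 < m) (hk : 0 < k) (α : ℚ)
    (x : Polynomial (MvPolynomial (Fin m) ℚ) ⧸ qhIdeal m k α) :
    ∃! f : (Fin m → ℕ) → Polynomial ℚ,
      (∀ lam ∉ (Fintype.piFinset fun _ : Fin m => Finset.range (k + 1)) |>.filter
          (fun lam : Fin m → ℕ => ∀ i j : Fin m, i ≤ j → lam j ≤ lam i),
        f lam = 0) ∧
      x = ∑ lam ∈ (Fintype.piFinset fun _ : Fin m => Finset.range (k + 1)) |>.filter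
          (fun lam : Fin m → ℕ => ∀ i j : Fin m, i ≤ j → lam j ≤ lam i),
        ((Ideal.Quotient.mk (qhIdeal m k α)).comp
            (Polynomial.mapRingHom MvPolynomial.C)) (f lam) *
          Ideal.Quotient.mk (qhIdeal m k α) (Polynomial.C (sigmaL m lam)) := by
  have : NeZero m := ⟨hm.ne'⟩
  have hx : x ∈ Submodule.span (Polynomial ℚ)
      (QuantumSchubert.sigmaClass m k α '' QuantumSchubert.boxPartitions m k) :=
    QuantumSchubert.span_sigmaClass_eq_top (m := m) ▸ Submodule.mem_top
  exact QuantumSchubert.existsUnique_eq_sum_smul_of_linearIndepOn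
    QuantumSchubert.linearIndepOn_sigmaClass hx
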